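/- arXiv:1307.2850 — 5 statements merged into one kernel-verified Lean document; each statement's English description precedes it below -/
import Mathlib

section
/- Let p be a prime number and n ≥ 1 a natural number. Then r(ℤ_p^n) = (p^{2n-1} + p^{n+1} - p^{n-1} + p^2 - p - 1) / (p^2 - 1); equivalently, (p^2 - 1) · r(ℤ_p^n) = p^{2n-1} + p^{n+1} - p^{n-1} + p^2 - p - 1. -/
/-!
The generating moves `(g, k) ↦ (k, -g)` and `(g, k) ↦ (g, k + m • g)` are the actions on
`V × V`, where `V = 𝔽_p^n`, of a rotation and of the lower unitriangular matrices in `SL₂(𝔽_p)`,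
and those matrices generate `SL₂(𝔽_p)`. Hence the classes are the orbits of `SL₂(𝔽_p)` on `V × V` (`mk_eq_mk_iff`), and they
can be counted by Burnside's lemma.

Put `N = |V|` and `q = p`. The identity fixes `N²` pairs, a matrix `g ≠ 1` of trace `2` fixes `N`
pairs (its fixed space in `𝔽_q²` is a line), and any other matrix fixes only `(0, 0)`, because
`det (g - 1) = 2 - tr g` (`card_fixedBy`). Since `SL₂(𝔽_q)` has `q³ - q` elements, `q²` of them of
trace `2` (`card_sl2`, `card_trace_two`), Burnside's lemma gives
`(q³ - q) * r = N² + (q² - 1) * N + (q³ - q - q²)`, and division by `q` with `N = q ^ n` yields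
the formula.
-/

/-- The relation on `G × G` whose generated equivalence relation identifies
`(g,k) ~ (k,-g)` and `(g,k) ~ (g, k + m • g)` for all integers `m`. -/
def pairRel (G : Type*) [AddCommGroup G] : G × G → G × G → Prop :=
  fun x y => y = (x.2, -x.1) ∨ ∃ m : ℤ, y = (x.1, x.2 + m • x.1)

/-- `r G` is the number of equivalence classes of `G × G` under the equivalence
relation generated by `pairRel G`. -/
noncomputable def numClasses (G : Type*) [AddCommGroup G] : ℕ :=
  Nat.card (Quot (pairRel G))

open Matrix MulAction

/-! ### Counting the orbits of `SL₂` on pairs of vectors -/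

section Burnside

variable {K V : Type*} [Field K] [AddCommGroup V] [Module K V]

/-- `SL₂(K)` acting on pairs of vectors, a pair being viewed as a column of length two. -/
@[reducible]
def pairAction (K V : Type*) [Field K] [AddCommGroup V] [Module K V] :
    MulAction (SpecialLinearGroup (Fin 2) K) (V × V) where
  smul g v := (g 0 0 • v.1 + g 0 1 • v.2, g 1 0 • v.1 + g 1 1 • v.2)
  one_smul v := by
    change ((1 : SpecialLinearGroup (Fin 2) K) 0 0 • v.1 +
      (1 : SpecialLinearGroup (Fin 2) K) 0 1 • v.2, (1 : SpecialLinearGroup (Fin 2) K) 1 0 • v.1 +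
      (1 : SpecialLinearGroup (Fin 2) K) 1 1 • v.2) = v
    simp
  mul_smul g h v := by
    have hm (i j : Fin 2) : (g * h) i j = g i 0 * h 0 j + g i 1 * h 1 j := by
      rw [Matrix.SpecialLinearGroup.coe_mul, Matrix.mul_apply, Fin.sum_univ_two]
    change ((g * h) 0 0 • v.1 + (g * h) 0 1 • v.2, (g * h) 1 0 • v.1 + (g * h) 1 1 • v.2) =
      (g 0 0 • (h 0 0 • v.1 + h 0 1 • v.2) + g 0 1 • (h 1 0 • v.1 + h 1 1 • v.2),
       g 1 0 • (h 0 0 • v.1 + h 0 1 • v.2) + g 1 1 • (h 1 0 • v.1 + h 1 1 • v.2))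
    rw [hm, hm, hm, hm]
    congr 1 <;> module

attribute [local instance] pairAction

lemma pair_smul_def (g : SpecialLinearGroup (Fin 2) K) (v : V × V) :
    g • v = (g 0 0 • v.1 + g 0 1 • v.2, g 1 0 • v.1 + g 1 1 • v.2) := rfl

lemma det_entries (g : SpecialLinearGroup (Fin 2) K) :
    g 0 0 * g 1 1 - g 0 1 * g 1 0 = 1 := by
  rw [← Matrix.det_fin_two, g.det_coe]

lemma mem_fixedBy_pair (g : SpecialLinearGroup (Fin 2) K) (v : V × V) :
    v ∈ fixedBy (V × V) g ↔
      g 0 0 • v.1 + g 0 1 • v.2 = v.1 ∧ g 1 0 • v.1 + g 1 1 • v.2 = v.2 := by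
  rw [mem_fixedBy, pair_smul_def, Prod.ext_iff]

/-- A matrix of trace different from `2` has no eigenvalue `1`. -/
lemma fixedBy_of_trace_ne {g : SpecialLinearGroup (Fin 2) K} (ht : g 0 0 + g 1 1 ≠ 2) :
    fixedBy (V × V) g = {0} := by
  ext ⟨x, y⟩
  have hd := det_entries g
  have h2 : 2 - (g 0 0 + g 1 1) ≠ 0 := sub_ne_zero.mpr ht.symm
  rw [mem_fixedBy_pair, Set.mem_singleton_iff, Prod.mk_eq_zero]
  constructor
  · rintro ⟨h₁, h₂⟩
    simp only at h₁ h₂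
    -- Multiply `g - 1` by its adjugate; the determinant of `g - 1` is `2 - tr g`.
    have hdet : 2 - (g 0 0 + g 1 1) = (g 0 0 - 1) * (g 1 1 - 1) - g 0 1 * g 1 0 := by
      linear_combination -hd
    constructor
    · refine (smul_eq_zero_iff_right h2).mp ?_
      rw [hdet]
      linear_combination (norm := module) (g 1 1 - 1) • h₁ - g 0 1 • h₂
    · refine (smul_eq_zero_iff_right h2).mp ?_
      rw [hdet]
      linear_combination (norm := module) (g 0 0 - 1) • h₂ - g 1 0 • h₁
  · rintro ⟨rfl, rfl⟩
    simp

/-- The fixed pairs of a nontrivial matrix of trace `2` are parametrized by one vector. -/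
lemma card_fixedBy_of_trace_eq {g : SpecialLinearGroup (Fin 2) K} (hg : g ≠ 1)
    (ht : g 0 0 + g 1 1 = 2) : Nat.card (fixedBy (V × V) g) = Nat.card V := by
  have hd := det_entries g
  by_cases hb : g 0 1 = 0
  · have ha : g 0 0 = 1 := by
      have : (g 0 0 - 1) ^ 2 = 0 := by
        rw [hb] at hd
        linear_combination g 0 0 * ht - hd
      exact sub_eq_zero.mp (pow_eq_zero_iff two_ne_zero |>.mp this)
    have hd1 : g 1 1 = 1 := by linear_combination ht - ha
    have hc : g 1 0 ≠ 0 := by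
      intro hc
      apply hg
      ext i j
      fin_cases i <;> fin_cases j <;> simp [ha, hb, hc, hd1]
    refine Nat.card_congr
      { toFun := fun v => v.1.2
        invFun := fun y => ⟨(0, y), by rw [mem_fixedBy_pair]; simp [hb, hd1]⟩
        left_inv := ?_
        right_inv := fun y => rfl }
    rintro ⟨⟨x, y⟩, h⟩
    rw [mem_fixedBy_pair] at h
    have hx : x = 0 := by simpa [hd1, hc] using h.2
    simp [hx]
  · refine Nat.card_congr
      { toFun := fun v => v.1.1
        invFun := fun x => ⟨(x, ((1 - g 0 0) / g 0 1) • x), ?_⟩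
        left_inv := ?_
        right_inv := fun y => rfl }
    · rw [mem_fixedBy_pair]
      simp only [smul_smul, ← add_smul]
      constructor
      · rw [mul_div_cancel₀ _ hb, add_sub_cancel, one_smul]
      · congr 1
        field_simp
        linear_combination ht - hd
    · rintro ⟨⟨x, y⟩, h⟩
      rw [mem_fixedBy_pair] at h
      have h₁ : g 0 1 • y = (1 - g 0 0) • x := by
        linear_combination (norm := module) h.1
      have hy : ((1 - g 0 0) / g 0 1) • x = y := by
        rw [div_eq_inv_mul, mul_smul, ← h₁, inv_smul_smul₀ hb]
      simp [hy]

open Classical in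
lemma card_fixedBy [Finite V] (g : SpecialLinearGroup (Fin 2) K) :
    (Nat.card (fixedBy (V × V) g) : ℤ) =
      1 + (if g 0 0 + g 1 1 = 2 then (Nat.card V : ℤ) - 1 else 0) +
        (if g = 1 then (Nat.card V : ℤ) ^ 2 - Nat.card V else 0) := by
  by_cases hg : g = 1
  · subst hg
    have : fixedBy (V × V) (1 : SpecialLinearGroup (Fin 2) K) = Set.univ := by
      ext v; simp
    rw [this, Nat.card_congr (Equiv.Set.univ _), Nat.card_prod]
    have h2 : (1 : K) + 1 = 2 := one_add_one_eq_two
    simp [h2]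
    ring
  · by_cases ht : g 0 0 + g 1 1 = 2
    · simp [hg, ht, card_fixedBy_of_trace_eq hg ht]
    · simp [hg, ht, fixedBy_of_trace_ne ht]

/-- The entries of a matrix in `SL₂(K)`, with the order `(a, b, d, c)` for `!![a, b; c, d]`. -/
def sl2Equiv (K : Type*) [Field K] : SpecialLinearGroup (Fin 2) K ≃
    {x : K × K × K × K // x.1 * x.2.2.1 - x.2.1 * x.2.2.2 = 1} where
  toFun g := ⟨(g 0 0, g 0 1, g 1 1, g 1 0), det_entries g⟩
  invFun x := ⟨!![x.1.1, x.1.2.1; x.1.2.2.2, x.1.2.2.1], by rw [Matrix.det_fin_two_of]; exact x.2⟩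
  left_inv g := by ext i j; fin_cases i <;> fin_cases j <;> rfl
  right_inv x := rfl

variable [Fintype K] [DecidableEq K]

/-- The number of `c` solving `b * c = e`. -/
lemma sum_ite_mul_eq (b e : K) :
    (∑ c : K, if b * c = e then (1 : ℤ) else 0) =
      1 + (if b = 0 then (if e = 0 then (Fintype.card K : ℤ) else 0) - 1 else 0) := by
  by_cases hb : b = 0
  · subst hb
    by_cases he : e = 0
    · simp [he]
    · simp [he, Ne.symm he]
  · have : ∀ c : K, b * c = e ↔ c = e / b := fun c => by
      rw [eq_div_iff hb, mul_comm]
    simp [this, hb]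

lemma card_sl2 :
    (Fintype.card (SpecialLinearGroup (Fin 2) K) : ℤ) =
      (Fintype.card K : ℤ) ^ 3 - Fintype.card K := by
  rw [Fintype.card_congr (sl2Equiv K), Fintype.card_subtype, Finset.card_filter]
  push_cast
  simp only [Fintype.sum_prod_type]
  have h (a b d c : K) : a * d - b * c = 1 ↔ b * c = a * d - 1 := by
    constructor <;> intro h <;> linear_combination -h
  have h' (a d : K) : a * d - 1 = 0 ↔ a * d = 1 := sub_eq_zero
  simp only [h, sum_ite_mul_eq, h']
  have h1 (a d : K) : (if a * d = 1 then (Fintype.card K : ℤ) else 0) =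
      Fintype.card K * (if a * d = 1 then (1 : ℤ) else 0) := by simp
  have hs : (∑ a : K, ∑ b : K, ∑ d : K, (1 + if b = 0 then
      (if a * d = 1 then (Fintype.card K : ℤ) else 0) - 1 else 0)) =
      ∑ a : K, ∑ d : K, ∑ b : K, (1 + if b = 0 then
      (if a * d = 1 then (Fintype.card K : ℤ) else 0) - 1 else 0) :=
    Finset.sum_congr rfl fun a _ => Finset.sum_comm
  rw [hs]
  simp only [h1, Finset.sum_add_distrib, Finset.sum_ite_eq', Finset.sum_sub_distrib,
    ← Finset.mul_sum, sum_ite_mul_eq, Finset.mem_univ, if_true, one_ne_zero, if_false]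
  simp
  ring

/-- Matrices `!![1 + x, b; c, 1 - x]` of determinant one correspond to solutions of
`b * c = -x ^ 2`. -/
lemma card_trace_two :
    (∑ g : SpecialLinearGroup (Fin 2) K, if g 0 0 + g 1 1 = 2 then (1 : ℤ) else 0) =
      (Fintype.card K : ℤ) ^ 2 := by
  let e : {g : SpecialLinearGroup (Fin 2) K // g 0 0 + g 1 1 = 2} ≃
      {x : K × K × K // x.2.1 * x.2.2 = - x.1 ^ 2} :=
    { toFun := fun g => ⟨(g.1 0 0 - 1, g.1 0 1, g.1 1 0), by
        linear_combination g.1 0 0 * g.2 - det_entries g.1⟩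
      invFun := fun x => ⟨⟨!![1 + x.1.1, x.1.2.1; x.1.2.2, 1 - x.1.1], by
        rw [Matrix.det_fin_two_of]; linear_combination -x.2⟩, by
          simp only [of_apply, cons_val', cons_val_zero, cons_val_one, cons_val_fin_one]; ring⟩
      left_inv := by
        rintro ⟨g, hg⟩
        ext i j
        fin_cases i <;> fin_cases j <;> simp
        linear_combination -hg
      right_inv := by
        rintro ⟨⟨x, b, c⟩, h⟩
        simp }
  have := Fintype.card_congr e
  rw [Fintype.card_subtype, Fintype.card_subtype, Finset.card_filter, Finset.card_filter] at this
  zify at this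
  rw [this]
  simp only [Fintype.sum_prod_type, sum_ite_mul_eq, neg_eq_zero, pow_eq_zero_iff two_ne_zero]
  simp [Finset.sum_add_distrib]
  ring

/-- Burnside's lemma for `SL₂(K)` acting on `V × V`. -/
lemma card_orbits_pair [Finite V] :
    ((Fintype.card K : ℤ) ^ 3 - Fintype.card K) *
        Nat.card (Quotient (orbitRel (SpecialLinearGroup (Fin 2) K) (V × V))) =
      (Nat.card V : ℤ) ^ 2 + ((Fintype.card K : ℤ) ^ 2 - 1) * Nat.card V +
        ((Fintype.card K : ℤ) ^ 3 - Fintype.card K - (Fintype.card K : ℤ) ^ 2) := by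
  classical
  have := Fintype.ofFinite V
  have hB := sum_card_fixedBy_eq_card_orbits_mul_card_group
    (SpecialLinearGroup (Fin 2) K) (V × V)
  simp only [← Nat.card_eq_fintype_card (α := fixedBy _ _),
    ← Nat.card_eq_fintype_card (α := Quotient _)] at hB
  zify at hB
  rw [card_sl2, mul_comm] at hB
  rw [← hB]
  have h1 (g : SpecialLinearGroup (Fin 2) K) :
      (if g 0 0 + g 1 1 = 2 then (Nat.card V : ℤ) - 1 else 0) =
      ((Nat.card V : ℤ) - 1) * (if g 0 0 + g 1 1 = 2 then (1 : ℤ) else 0) := by simp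
  have h2 : (∑ g : SpecialLinearGroup (Fin 2) K,
      if g = 1 then (Nat.card V : ℤ) ^ 2 - Nat.card V else 0) =
      (Nat.card V : ℤ) ^ 2 - Nat.card V := by simp
  have h3 : (∑ _g : SpecialLinearGroup (Fin 2) K, (1 : ℤ)) =
      (Fintype.card K : ℤ) ^ 3 - Fintype.card K := by rw [← card_sl2]; simp
  have h4 := card_trace_two (K := K)
  calc (∑ g : SpecialLinearGroup (Fin 2) K, (Nat.card (fixedBy (V × V) g) : ℤ))
      = ∑ g : SpecialLinearGroup (Fin 2) K,
          (1 + ((Nat.card V : ℤ) - 1) * (if g 0 0 + g 1 1 = 2 then (1 : ℤ) else 0) +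
            (if g = 1 then (Nat.card V : ℤ) ^ 2 - Nat.card V else 0)) := by
        refine Finset.sum_congr rfl fun g _ => ?_
        rw [card_fixedBy, ← h1]
        congr
    _ = _ := by
        rw [Finset.sum_add_distrib, Finset.sum_add_distrib, ← Finset.mul_sum, h2, h3, h4]
        ring

end Burnside

/-! ### The classes are the orbits of `SL₂` -/

section Orbits

variable {p : ℕ} [Fact p.Prime] {V : Type*} [AddCommGroup V] [Module (ZMod p) V]

attribute [local instance] pairAction

lemma mk_swap (x y : V) : Quot.mk (pairRel V) (y, -x) = Quot.mk (pairRel V) (x, y) :=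
  (Quot.sound (r := pairRel V) (a := (x, y)) (Or.inl rfl)).symm

lemma mk_lower (s : ZMod p) (x y : V) :
    Quot.mk (pairRel V) (x, y + s • x) = Quot.mk (pairRel V) (x, y) := by
  refine (Quot.sound (r := pairRel V) (Or.inr ⟨(s.val : ℤ), ?_⟩)).symm
  rw [natCast_zsmul, ← Nat.cast_smul_eq_nsmul (ZMod p), ZMod.natCast_zmod_val]

/-- Upper unitriangular matrices are conjugate to lower ones by the rotation
`(x, y) ↦ (y, -x)`, whose fourth power is the identity. -/
lemma mk_upper (s : ZMod p) (x y : V) :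
    Quot.mk (pairRel V) (x + s • y, y) = Quot.mk (pairRel V) (x, y) := by
  have h := mk_lower (-s) y (-x)
  rw [mk_swap] at h
  rw [← h, ← mk_swap y, ← mk_swap, ← mk_swap]
  congr 2
  module

/-- A matrix `!![a, b; c, d]` in `SL₂` with `b ≠ 0` is the product of the unitriangular matrices
`!![1, 0; (d - 1) / b, 1]`, `!![1, b; 0, 1]` and `!![1, 0; (a - 1) / b, 1]`. -/
lemma mk_of_ne_zero {a b c d : ZMod p} (hb : b ≠ 0) (h : a * d - b * c = 1) (x y : V) :
    Quot.mk (pairRel V) (a • x + b • y, c • x + d • y) = Quot.mk (pairRel V) (x, y) := by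
  rw [← mk_lower ((a - 1) / b) x y, ← mk_upper b x (y + _), ← mk_lower ((d - 1) / b) (x + _)]
  congr 2
  · match_scalars
    · field_simp
      ring
    · ring
  · match_scalars
    · field_simp
      linear_combination -h
    · field_simp
      ring

lemma mk_smul (g : SpecialLinearGroup (Fin 2) (ZMod p)) (v : V × V) :
    Quot.mk (pairRel V) (g • v) = Quot.mk (pairRel V) v := by
  obtain ⟨x, y⟩ := v
  rw [pair_smul_def]
  have hd := det_entries g
  by_cases hb : g 0 1 = 0
  · -- Adding the second row to the first makes the upper right entry nonzero.
    have hd1 : g 0 1 + g 1 1 ≠ 0 := by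
      intro h0
      rw [hb, zero_add] at h0
      simp [hb, h0] at hd
    rw [← mk_upper (1 : ZMod p),
      ← mk_of_ne_zero (a := g 0 0 + g 1 0) (c := g 1 0) (d := g 1 1) hd1
        (by linear_combination hd) x y]
    congr 2
    module
  · exact mk_of_ne_zero hb hd x y

lemma mk_eq_mk_iff (v w : V × V) :
    Quot.mk (pairRel V) v = Quot.mk (pairRel V) w ↔
      orbitRel (SpecialLinearGroup (Fin 2) (ZMod p)) (V × V) v w := by
  constructor
  · intro h
    have h' := Quot.eqvGen_exact h
    clear h
    induction h' with
    | rel v w h =>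
      refine (orbitRel _ _).symm ?_
      obtain ⟨x, y⟩ := v
      rcases h with rfl | ⟨m, rfl⟩
      · let g : SpecialLinearGroup (Fin 2) (ZMod p) :=
          ⟨!![0, 1; -1, 0], by simp [Matrix.det_fin_two_of]⟩
        refine ⟨g, (pair_smul_def g (x, y)).trans ?_⟩
        simp [g]
      · let g : SpecialLinearGroup (Fin 2) (ZMod p) :=
          ⟨!![1, 0; (m : ZMod p), 1], by simp [Matrix.det_fin_two_of]⟩
        refine ⟨g, (pair_smul_def g (x, y)).trans ?_⟩
        simp [g, Int.cast_smul_eq_zsmul, add_comm]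
    | refl v => exact (orbitRel _ _).refl v
    | symm v w _ ih => exact (orbitRel _ _).symm ih
    | trans u v w _ _ ih₁ ih₂ => exact (orbitRel _ _).trans ih₁ ih₂
  · rintro ⟨g, rfl⟩
    exact mk_smul g w

variable (p V) in
lemma numClasses_eq_card_orbits :
    numClasses V =
      Nat.card (Quotient (orbitRel (SpecialLinearGroup (Fin 2) (ZMod p)) (V × V))) := by
  refine Nat.card_eq_of_bijective
    (Quot.lift (fun v => Quotient.mk (orbitRel (SpecialLinearGroup (Fin 2) (ZMod p)) (V × V)) v)
      fun v w h => Quotient.sound ((mk_eq_mk_iff v w).mp (Quot.sound h))) ⟨?_, ?_⟩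
  · rintro ⟨v⟩ ⟨w⟩ h
    exact (mk_eq_mk_iff v w).mpr (Quotient.exact h)
  · rintro ⟨v⟩
    exact ⟨Quot.mk _ v, rfl⟩

end Orbits

theorem numClasses_zmod_pow (p n : ℕ) (hp : p.Prime) (hn : 1 ≤ n) :
    ((p : ℤ) ^ 2 - 1) * numClasses (Fin n → ZMod p) =
      (p : ℤ) ^ (2 * n - 1) + (p : ℤ) ^ (n + 1) - (p : ℤ) ^ (n - 1)
        + (p : ℤ) ^ 2 - p - 1 := by
  have : Fact p.Prime := ⟨hp⟩
  have h := card_orbits_pair (K := ZMod p) (V := Fin n → ZMod p)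
  rw [← numClasses_eq_card_orbits, ZMod.card] at h
  have hV : Nat.card (Fin n → ZMod p) = p ^ n := by simp
  rw [hV] at h
  obtain ⟨m, rfl⟩ : ∃ m, n = m + 1 := ⟨n - 1, by omega⟩
  have hp0 : (p : ℤ) ≠ 0 := by exact_mod_cast hp.ne_zero
  apply mul_left_cancel₀ hp0
  rw [show 2 * (m + 1) - 1 = 2 * m + 1 by omega, Nat.add_sub_cancel]
  push_cast at h
  linear_combination h
end

section
/- Let p be a prime number and n ≥ 1 a natural number. Then r(ℤ_p^{n+1}) - r(ℤ_p^n) = p^{n-1}(p^n + p - 1). -/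
open MulAction Matrix.SpecialLinearGroup
open scoped MatrixGroups

section classes

variable {p : ℕ} [Fact p.Prime] {n : ℕ}

lemma mk_eq_mk_add_smul (x y : Fin n → ZMod p) (c : ZMod p) :
    Quot.mk (pairRel (Fin n → ZMod p)) (x, y) = Quot.mk _ (x, y + c • x) := by
  refine Quot.sound (Or.inr ⟨(c.val : ℤ), ?_⟩)
  have : ((c.val : ℤ) • x) = c • x := by
    ext i
    simp
  rw [this]

lemma mk_eq_mk_swap (x y : Fin n → ZMod p) :
    Quot.mk (pairRel (Fin n → ZMod p)) (x, y) = Quot.mk _ (y, -x) :=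
  Quot.sound (Or.inl rfl)

lemma mk_eq_mk_smul_add (x y : Fin n → ZMod p) (c : ZMod p) :
    Quot.mk (pairRel (Fin n → ZMod p)) (x, y) = Quot.mk _ (x + c • y, y) := by
  rw [mk_eq_mk_swap x y, mk_eq_mk_add_smul _ _ (-c), mk_eq_mk_swap (x + c • y) y]
  congr 2
  module

lemma mk_eq_mk_of_det_of_ne {a b c d : ZMod p} (h : a * d - b * c = 1) (hb : b ≠ 0)
    (x y : Fin n → ZMod p) :
    Quot.mk (pairRel (Fin n → ZMod p)) (x, y) =
      Quot.mk _ (a • x + b • y, c • x + d • y) := by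
  -- The factorisation of the matrix into a lower, an upper and a lower unipotent one.
  rw [mk_eq_mk_add_smul x y ((a - 1) / b), mk_eq_mk_smul_add _ _ b,
    mk_eq_mk_add_smul _ _ ((d - 1) / b)]
  congr 2
  · ext i
    simp only [Pi.add_apply, Pi.smul_apply, smul_eq_mul]
    field_simp
    ring
  · ext i
    simp only [Pi.add_apply, Pi.smul_apply, smul_eq_mul]
    field_simp
    linear_combination (x i) * h

/-- Pairs related by a matrix of determinant one lie in the same class. -/
lemma mk_eq_mk_of_det {a b c d : ZMod p} (h : a * d - b * c = 1) (x y : Fin n → ZMod p) :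
    Quot.mk (pairRel (Fin n → ZMod p)) (x, y) =
      Quot.mk _ (a • x + b • y, c • x + d • y) := by
  by_cases hb : b = 0
  · subst hb
    have ha : a ≠ 0 := by
      rintro rfl
      simp at h
    -- Precomposing with the swap moves the nonzero entry `a` off the diagonal.
    rw [mk_eq_mk_swap,
      mk_eq_mk_of_det_of_ne (a := 0) (b := -a) (c := d) (d := -c) (by linear_combination h)
        (neg_ne_zero.mpr ha)]
    congr 2 <;> module
  · exact mk_eq_mk_of_det_of_ne h hb x y

/-- A pair of vectors, seen as the tuple of columns of a `2 × n` matrix. -/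
def columns (x : (Fin n → ZMod p) × (Fin n → ZMod p)) : Fin n → Fin 2 → ZMod p :=
  fun i => ![x.1 i, x.2 i]

lemma smul_columns (g : SL(2, ZMod p)) (x y : Fin n → ZMod p) :
    g • columns (x, y) =
      columns (g 0 0 • x + g 0 1 • y, g 1 0 • x + g 1 1 • y) := by
  ext i j
  fin_cases j <;>
  simp [columns, Matrix.SpecialLinearGroup.smul_def, Matrix.mulVec, dotProduct, Fin.sum_univ_two]

lemma columns_mem_orbit {x y : (Fin n → ZMod p) × (Fin n → ZMod p)}
    (h : pairRel (Fin n → ZMod p) x y) :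
    columns y ∈ orbit SL(2, ZMod p) (columns x) := by
  obtain ⟨x1, x2⟩ := x
  rcases h with h | ⟨m, h⟩
  · refine ⟨⟨!![0, 1; -1, 0], by simp [Matrix.det_fin_two]⟩, ?_⟩
    refine (smul_columns _ x1 x2).trans ?_
    rw [h]
    congr 1
    ext i <;> simp
  · refine ⟨⟨!![1, 0; m, 1], by simp [Matrix.det_fin_two]⟩, ?_⟩
    refine (smul_columns _ x1 x2).trans ?_
    rw [h]
    congr 1
    ext i <;> simp [add_comm]

/-- The classes of pairs are the orbits of `SL₂` on tuples of columns. -/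
noncomputable def quotEquiv (p : ℕ) [Fact p.Prime] (n : ℕ) :
    Quot (pairRel (Fin n → ZMod p)) ≃
      orbitRel.Quotient SL(2, ZMod p) (Fin n → Fin 2 → ZMod p) where
  toFun := Quot.lift (fun x => Quotient.mk _ (columns x)) fun x y h =>
    (Quotient.sound (orbitRel_apply.mpr (columns_mem_orbit h))).symm
  invFun := Quotient.lift (fun v => Quot.mk _ (fun i => v i 0, fun i => v i 1)) (by
    rintro _ v ⟨g, rfl⟩
    have hdet := g.det_coe
    rw [Matrix.det_fin_two] at hdet
    rw [mk_eq_mk_of_det hdet (fun i => v i 0) (fun i => v i 1)]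
    congr 2 <;> ext i <;>
    simp [Matrix.SpecialLinearGroup.smul_def, Matrix.mulVec, dotProduct, Fin.sum_univ_two])
  left_inv := by
    rintro ⟨x⟩
    rfl
  right_inv := by
    rintro ⟨v⟩
    refine congrArg (Quotient.mk _) ?_
    ext i j
    fin_cases j <;> rfl

end classes

section burnside

variable (p : ℕ) [Fact p.Prime]

/-- The number of vectors of `F²` fixed by `g`. -/
noncomputable def fixCard (g : SL(2, ZMod p)) : ℕ :=
  Nat.card (fixedBy (Fin 2 → ZMod p) g)

lemma sum_card_fixedBy (X : Type*) [Finite X] [MulAction SL(2, ZMod p) X] :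
    ∑ g : SL(2, ZMod p), Nat.card (fixedBy X g) =
      Nat.card (orbitRel.Quotient SL(2, ZMod p) X) * Nat.card SL(2, ZMod p) := by
  classical
  have := Fintype.ofFinite X
  have := Fintype.ofFinite (orbitRel.Quotient SL(2, ZMod p) X)
  have h := sum_card_fixedBy_eq_card_orbits_mul_card_group SL(2, ZMod p) X
  simpa only [Nat.card_eq_fintype_card] using h

/-- A tuple is fixed exactly when all of its columns are. -/
def fixedByPiEquiv {G X : Type*} [Group G] [MulAction G X] (n : ℕ) (g : G) :
    fixedBy (Fin n → X) g ≃ (Fin n → fixedBy X g) where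
  toFun v i := ⟨v.1 i, congrFun v.2 i⟩
  invFun v := ⟨fun i => (v i).1, funext fun i => (v i).2⟩
  left_inv _ := rfl
  right_inv _ := rfl

lemma sum_fixCard_pow (n : ℕ) :
    ∑ g : SL(2, ZMod p), fixCard p g ^ n =
      numClasses (Fin n → ZMod p) * Nat.card SL(2, ZMod p) := by
  rw [numClasses, Nat.card_congr (quotEquiv p n), ← sum_card_fixedBy]
  refine Finset.sum_congr rfl fun g _ => ?_
  rw [Nat.card_congr (fixedByPiEquiv n g), Nat.card_pi]
  simp [fixCard]

/-- `SL₂` is transitive on nonzero vectors. -/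
lemma exists_smul_eq {v : Fin 2 → ZMod p} (hv : v ≠ 0) :
    ∃ g : SL(2, ZMod p), g • (![1, 0] : Fin 2 → ZMod p) = v := by
  have hco : IsCoprime (v 0) (v 1) := by
    by_cases h0 : v 0 = 0
    · have h1 : v 1 ≠ 0 := by
        intro h1
        apply hv
        ext i
        fin_cases i <;> simp [h0, h1]
      exact (isCoprime_of_dvd _ _ (by simp [h1]) (fun z hz _ _ hz1 => hz
        (isUnit_of_dvd_unit hz1 (isUnit_iff_ne_zero.mpr h1))))
    · exact (isCoprime_of_dvd _ _ (by simp [h0]) (fun z hz _ hz1 _ => hz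
        (isUnit_of_dvd_unit hz1 (isUnit_iff_ne_zero.mpr h0))))
  obtain ⟨g, hg0, hg1⟩ := hco.exists_SL2_col 0
  refine ⟨g, ?_⟩
  ext i
  fin_cases i <;>
  simp [Matrix.SpecialLinearGroup.smul_def, Matrix.mulVec, dotProduct, Fin.sum_univ_two, hg0, hg1]

lemma orbit_e : orbit SL(2, ZMod p) (![1, 0] : Fin 2 → ZMod p) = {0}ᶜ := by
  ext v
  simp only [Set.mem_compl_iff, Set.mem_singleton_iff]
  refine ⟨?_, exists_smul_eq p⟩
  rintro ⟨g, rfl⟩ h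
  have h' := (smul_eq_zero_iff_eq g).mp h
  simpa using congrFun h' 0

lemma card_orbits :
    Nat.card (orbitRel.Quotient SL(2, ZMod p) (Fin 2 → ZMod p)) = 2 := by
  rw [Nat.card_eq_two_iff]
  refine ⟨Quotient.mk _ 0, Quotient.mk _ ![1, 0], ?_, ?_⟩
  · intro h
    have h' := orbitRel_apply.mp (Quotient.exact h)
    rw [orbit_e] at h'
    simp at h'
  · refine Set.eq_univ_of_forall ?_
    rintro ⟨v⟩
    by_cases hv : v = 0
    · left
      rw [hv]
      rfl
    · right
      refine Quotient.sound (orbitRel_apply.mpr ?_)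
      rw [orbit_e]
      exact hv

lemma sum_fixCard :
    ∑ g : SL(2, ZMod p), fixCard p g = 2 * Nat.card SL(2, ZMod p) := by
  have h := sum_card_fixedBy p (Fin 2 → ZMod p)
  rwa [card_orbits] at h

lemma mem_stabilizer_e (g : SL(2, ZMod p)) :
    g ∈ stabilizer SL(2, ZMod p) (![1, 0] : Fin 2 → ZMod p) ↔ g 0 0 = 1 ∧ g 1 0 = 0 := by
  rw [mem_stabilizer_iff, funext_iff, Fin.forall_fin_two]
  simp [Matrix.SpecialLinearGroup.smul_def, Matrix.mulVec, dotProduct, Fin.sum_univ_two]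

/-- The stabiliser of the first basis vector consists of the upper unipotent matrices. -/
def stabilizerEquiv :
    stabilizer SL(2, ZMod p) (![1, 0] : Fin 2 → ZMod p) ≃ ZMod p where
  toFun g := g.1 0 1
  invFun t := ⟨⟨!![1, t; 0, 1], by simp [Matrix.det_fin_two]⟩, (mem_stabilizer_e p _).mpr (by simp)⟩
  left_inv := by
    rintro ⟨g, hg⟩
    obtain ⟨h0, h1⟩ := (mem_stabilizer_e p g).mp hg
    have hdet := g.det_coe
    rw [Matrix.det_fin_two, h0, h1] at hdet
    ext i j
    fin_cases i <;> fin_cases j <;> simp_all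
  right_inv t := by simp

lemma card_SL2 : Nat.card SL(2, ZMod p) = (p ^ 2 - 1) * p := by
  rw [← Nat.card_congr (orbitProdStabilizerEquivGroup SL(2, ZMod p) (![1, 0] : Fin 2 → ZMod p)),
    Nat.card_prod, Nat.card_congr (stabilizerEquiv p), orbit_e, Nat.card_zmod,
    Nat.card_coe_set_eq, Set.ncard_compl]
  simp

/-- The fixed vectors of `g` as a subgroup of `F²`. -/
def fixedSubgroup (g : SL(2, ZMod p)) : AddSubgroup (Fin 2 → ZMod p) where
  carrier := fixedBy (Fin 2 → ZMod p) g
  add_mem' {a b} ha hb := by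
    rw [mem_fixedBy] at *
    rw [smul_add, ha, hb]
  zero_mem' := smul_zero g
  neg_mem' {a} ha := by
    rw [mem_fixedBy] at *
    rw [smul_neg, ha]

lemma fixCard_one : fixCard p 1 = p ^ 2 := by
  simp [fixCard]

lemma fixCard_of_ne {g : SL(2, ZMod p)} (hg : g ≠ 1) : fixCard p g = 1 ∨ fixCard p g = p := by
  have hp : p.Prime := Fact.out
  have hV : Nat.card (Fin 2 → ZMod p) = p ^ 2 := by simp
  have hdvd : fixCard p g ∣ p ^ 2 := hV ▸ (fixedSubgroup p g).card_addSubgroup_dvd_card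
  obtain ⟨k, hk, hfk⟩ := (Nat.dvd_prime_pow hp).mp hdvd
  interval_cases k
  · left
    simpa using hfk
  · right
    simpa using hfk
  · exfalso
    apply hg
    have htop : fixedSubgroup p g = ⊤ :=
      AddSubgroup.eq_top_of_card_eq _ (hfk.trans hV.symm)
    have hfix (v : Fin 2 → ZMod p) : g • v = v := by
      have : v ∈ fixedSubgroup p g := htop ▸ AddSubgroup.mem_top v
      exact this
    ext i j
    have h := congrFun (hfix (Pi.single j 1)) i
    change Matrix.mulVec (g : Matrix (Fin 2) (Fin 2) (ZMod p)) (Pi.single j 1) i = _ at h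
    rw [Matrix.mulVec_single_one] at h
    simpa [Matrix.one_apply, Pi.single_apply] using h

end burnside

theorem numClasses_succ_sub (p n : ℕ) (hp : p.Prime) (hn : 1 ≤ n) :
    (numClasses (Fin (n + 1) → ZMod p) : ℤ) - numClasses (Fin n → ZMod p) =
      (p : ℤ) ^ (n - 1) * ((p : ℤ) ^ n + p - 1) := by
  have : Fact p.Prime := ⟨hp⟩
  classical
  have hp2 : (2 : ℤ) ≤ p := by exact_mod_cast hp.two_le
  set N : ℤ := (Nat.card SL(2, ZMod p) : ℤ) with hN
  have hNval : N = ((p : ℤ) ^ 2 - 1) * p := by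
    rw [hN, card_SL2, Nat.cast_mul, Nat.cast_sub (Nat.one_le_pow _ _ hp.pos)]
    simp
  have hB (m : ℕ) : ∑ g : SL(2, ZMod p), (fixCard p g : ℤ) ^ m =
      numClasses (Fin m → ZMod p) * N := by
    rw [hN]
    exact_mod_cast sum_fixCard_pow p m
  have h1 : ∑ g : SL(2, ZMod p), ((fixCard p g : ℤ) - 1) = N := by
    have h : ∑ g : SL(2, ZMod p), (fixCard p g : ℤ) = 2 * N := by
      rw [hN]
      exact_mod_cast sum_fixCard p
    rw [Finset.sum_sub_distrib, h, Finset.sum_const, Finset.card_univ, ← Nat.card_eq_fintype_card,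
      nsmul_one, ← hN]
    ring
  -- The defect `f(g)ⁿ (f(g) - 1) - pⁿ (f(g) - 1)` is supported on the identity.
  have hdefect : ∑ g : SL(2, ZMod p),
      ((fixCard p g : ℤ) ^ (n + 1) - (fixCard p g : ℤ) ^ n - (p : ℤ) ^ n * ((fixCard p g : ℤ) - 1))
      = ((p : ℤ) ^ (2 * n) - (p : ℤ) ^ n) * ((p : ℤ) ^ 2 - 1) := by
    rw [Finset.sum_eq_single 1]
    · rw [fixCard_one]
      push_cast
      ring
    · intro g _ hg
      rcases fixCard_of_ne p hg with h | h <;> rw [h] <;> push_cast <;> ring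
    · simp
  rw [Finset.sum_sub_distrib, Finset.sum_sub_distrib, ← Finset.mul_sum, hB, hB, h1] at hdefect
  have hN0 : N ≠ 0 := by
    rw [hNval]
    have : (0 : ℤ) < (p : ℤ) ^ 2 - 1 := by nlinarith
    positivity
  apply mul_right_cancel₀ hN0
  obtain ⟨m, rfl⟩ : ∃ m, n = m + 1 := ⟨n - 1, by omega⟩
  rw [Nat.add_sub_cancel, sub_mul, ← sub_eq_zero]
  rw [hNval] at hdefect ⊢
  linear_combination hdefect
end

section
/- Let p be a prime number. Define F(n) = r(ℤ_p^{n+1}) - r(ℤ_p^n) for n ≥ 1. Then for every n ≥ 2 the recurrence F(n) = p·F(n-1) + p^{2n-2}(p - 1) holds. -/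
open Fin in
/-- For a pair with first column `(a, b)` and tails `(g, k)`, the invariant consisting of the
vector `b g - a k` and the set of all `c g + d k` with `c a + d b = 1`. The set is empty exactly
when the first column vanishes. -/
def columnInvariant {p n : ℕ} (x : (Fin (n + 1) → ZMod p) × (Fin (n + 1) → ZMod p)) :
    (Fin n → ZMod p) × Set (Fin n → ZMod p) :=
  (x.2 0 • tail x.1 - x.1 0 • tail x.2,
    {v | ∃ c d : ZMod p, c * x.1 0 + d * x.2 0 = 1 ∧ v = c • tail x.1 + d • tail x.2})

theorem columnInvariant_eq_of_pairRel {p n : ℕ}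
    {x y : (Fin (n + 1) → ZMod p) × (Fin (n + 1) → ZMod p)} (h : pairRel _ x y) :
    columnInvariant x = columnInvariant y := by
  obtain ⟨g, k⟩ := x
  rcases h with rfl | ⟨m, rfl⟩
  · refine Prod.ext ?_ (Set.ext fun v => ⟨?_, ?_⟩)
    · funext i
      simp [columnInvariant, Fin.tail]
      ring
    · rintro ⟨c, d, h1, rfl⟩
      refine ⟨d, -c, ?_, ?_⟩
      · simp at h1 ⊢
        linear_combination h1
      · funext i
        simp [Fin.tail]
        ring
    · rintro ⟨c, d, h1, rfl⟩
      refine ⟨-d, c, ?_, ?_⟩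
      · simp at h1 ⊢
        linear_combination h1
      · funext i
        simp [Fin.tail]
        ring
  · refine Prod.ext ?_ (Set.ext fun v => ⟨?_, ?_⟩)
    · funext i
      simp [columnInvariant, Fin.tail]
      ring
    · rintro ⟨c, d, h1, rfl⟩
      refine ⟨c - d * m, d, ?_, ?_⟩
      · simp at h1 ⊢
        linear_combination h1
      · funext i
        simp [Fin.tail]
        ring
    · rintro ⟨c, d, h1, rfl⟩
      refine ⟨c + d * m, d, ?_, ?_⟩
      · simp at h1 ⊢
        linear_combination h1
      · funext i
        simp [Fin.tail]
        ring

theorem columnInvariant_eq_of_mk_eq {p n : ℕ}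
    {x y : (Fin (n + 1) → ZMod p) × (Fin (n + 1) → ZMod p)}
    (h : Quot.mk (pairRel _) x = Quot.mk (pairRel _) y) :
    columnInvariant x = columnInvariant y :=
  congrArg (Quot.lift columnInvariant fun _ _ => columnInvariant_eq_of_pairRel) h

theorem mk_swap_s3 {G : Type*} [AddCommGroup G] (g k : G) :
    Quot.mk (pairRel G) (g, k) = Quot.mk (pairRel G) (k, -g) :=
  Quot.sound (Or.inl rfl)

theorem mk_shear {p n : ℕ} [NeZero p] (c : ZMod p) (g k : Fin n → ZMod p) :
    Quot.mk (pairRel _) (g, k) = Quot.mk (pairRel _) (g, k + c • g) := by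
  obtain ⟨m, rfl⟩ := ZMod.intCast_surjective c
  exact Quot.sound (Or.inr ⟨m, by rw [Int.cast_smul_eq_zsmul]⟩)

theorem exists_normal_form_of_ne_zero {p n : ℕ} [Fact p.Prime]
    (g k : Fin (n + 1) → ZMod p) (h : g 0 ≠ 0) :
    ∃ g' k' : Fin n → ZMod p, Quot.mk (pairRel _) (g, k) =
      Quot.mk (pairRel _) (Fin.cons 0 g', Fin.cons 1 k') := by
  -- First columns `(a, b) → (a, 1) → (1, -a) → (1, 0) → (0, -1) → (-1, 0) → (0, 1)`.
  rw [mk_shear ((1 - k 0) / g 0), mk_swap_s3, mk_shear (g 0), mk_swap_s3, mk_swap_s3, mk_swap_s3]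
  generalize hu : k + ((1 - k 0) / g 0) • g = u
  have hu0 : u 0 = 1 := by
    rw [← hu]
    simp
    field_simp
    ring
  have cons_eq : ∀ (w : Fin (n + 1) → ZMod p) (c : ZMod p), w 0 = c →
      w = Fin.cons c (Fin.tail w) := by
    rintro w _ rfl
    exact (Fin.cons_self_tail w).symm
  refine ⟨_, _, congrArg _ (Prod.ext (cons_eq _ 0 ?_) (cons_eq _ 1 ?_))⟩ <;> simp [hu0]

theorem exists_normal_form {p n : ℕ} [Fact p.Prime]
    (g k : Fin (n + 1) → ZMod p) (h : g 0 ≠ 0 ∨ k 0 ≠ 0) :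
    ∃ g' k' : Fin n → ZMod p, Quot.mk (pairRel _) (g, k) =
      Quot.mk (pairRel _) (Fin.cons 0 g', Fin.cons 1 k') := by
  rcases h with h | h
  · exact exists_normal_form_of_ne_zero g k h
  · rw [mk_swap_s3]
    exact exists_normal_form_of_ne_zero _ _ h

/-- Prepending a zero first column, as a map on classes. -/
def consZero (p n : ℕ) (q : Quot (pairRel (Fin n → ZMod p))) :
    Quot (pairRel (Fin (n + 1) → ZMod p)) :=
  Quot.map (fun x => (Fin.cons 0 x.1, Fin.cons 0 x.2)) (by
    rintro ⟨g, k⟩ y (rfl | ⟨m, rfl⟩)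
    · refine Or.inl (Prod.ext rfl ?_)
      funext i
      refine Fin.cases ?_ (fun j => ?_) i <;> simp
    · refine Or.inr ⟨m, Prod.ext rfl ?_⟩
      funext i
      refine Fin.cases ?_ (fun j => ?_) i <;> simp) q

/-- Deleting the first column, as a map on classes. -/
def dropFirst (p n : ℕ) (q : Quot (pairRel (Fin (n + 1) → ZMod p))) :
    Quot (pairRel (Fin n → ZMod p)) :=
  Quot.map (fun x => (Fin.tail x.1, Fin.tail x.2)) (by
    rintro ⟨g, k⟩ y (rfl | ⟨m, rfl⟩)
    · exact Or.inl rfl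
    · exact Or.inr ⟨m, rfl⟩) q

theorem dropFirst_consZero (p n : ℕ) (q : Quot (pairRel (Fin n → ZMod p))) :
    dropFirst p n (consZero p n q) = q := by
  induction q using Quot.ind
  rfl

/-- The classes with `n + 1` columns, parametrized by those with zero first column and those with
normal form `(cons 0 g, cons 1 k)`, where `k` only matters modulo `g`. -/
noncomputable def classParam (p n : ℕ) :
    Quot (pairRel (Fin n → ZMod p)) ⊕
      (Σ g : Fin n → ZMod p, (Fin n → ZMod p) ⧸ AddSubgroup.zmultiples g) →
    Quot (pairRel (Fin (n + 1) → ZMod p)) :=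
  Sum.elim (consZero p n) fun s => Quot.mk _ (Fin.cons 0 s.1, Fin.cons 1 s.2.out)

theorem consZero_ne_mk {p n : ℕ} [Fact p.Prime] (q : Quot (pairRel (Fin n → ZMod p)))
    (g k : Fin n → ZMod p) :
    consZero p n q ≠ Quot.mk _ (Fin.cons 0 g, Fin.cons 1 k) := by
  induction q using Quot.ind with | _ x
  intro h
  have h2 := (Prod.ext_iff.1 (columnInvariant_eq_of_mk_eq h)).2
  have : k ∈ (columnInvariant (p := p) (n := n) (Fin.cons 0 g, Fin.cons 1 k)).2 :=
    ⟨0, 1, by simp, by simp⟩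
  rw [← h2] at this
  obtain ⟨c, d, h1, -⟩ := this
  simp at h1

theorem classParam_injective (p n : ℕ) [Fact p.Prime] : Function.Injective (classParam p n) := by
  rintro (q | ⟨g, q⟩) (q' | ⟨g', q'⟩) h
  · have := congrArg (dropFirst p n) h
    simp only [classParam, Sum.elim_inl, dropFirst_consZero] at this
    rw [this]
  · exact absurd h (consZero_ne_mk _ _ _)
  · exact absurd h.symm (consZero_ne_mk _ _ _)
  · have h1 := columnInvariant_eq_of_mk_eq h
    obtain rfl : g = g' := by simpa [columnInvariant] using (Prod.ext_iff.1 h1).1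
    have : q.out ∈ (columnInvariant (p := p) (n := n) (Fin.cons 0 g, Fin.cons 1 q.out)).2 :=
      ⟨0, 1, by simp, by simp⟩
    rw [(Prod.ext_iff.1 h1).2] at this
    obtain ⟨c, d, h2, h3⟩ := this
    obtain rfl : d = 1 := by simpa using h2
    obtain ⟨m, rfl⟩ := ZMod.intCast_surjective c
    simp [Int.cast_smul_eq_zsmul] at h3
    have : q = q' := by
      rw [← QuotientAddGroup.out_eq' q, ← QuotientAddGroup.out_eq' q', h3]
      rw [eq_comm, QuotientAddGroup.eq]
      exact ⟨m, by simp⟩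
    rw [this]

theorem classParam_surjective (p n : ℕ) [Fact p.Prime] :
    Function.Surjective (classParam p n) := by
  intro q
  induction q using Quot.ind with | _ x
  obtain ⟨g, k⟩ := x
  by_cases h : g 0 ≠ 0 ∨ k 0 ≠ 0
  · obtain ⟨g', k', h⟩ := exists_normal_form g k h
    refine ⟨Sum.inr ⟨g', QuotientAddGroup.mk k'⟩, ?_⟩
    rw [h]
    obtain ⟨⟨_, m, rfl⟩, hm⟩ := QuotientAddGroup.mk_out_eq_add (AddSubgroup.zmultiples g') k'
    simp only [classParam, Sum.elim_inr]
    rw [hm]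
    symm
    apply Quot.sound
    refine Or.inr ⟨m, Prod.ext rfl ?_⟩
    funext i
    refine Fin.cases ?_ (fun j => ?_) i <;> simp
  · push Not at h
    refine ⟨Sum.inl (Quot.mk _ (Fin.tail g, Fin.tail k)), ?_⟩
    have hg := Fin.cons_self_tail g
    have hk := Fin.cons_self_tail k
    rw [h.1] at hg
    rw [h.2] at hk
    change Quot.mk _ (Fin.cons 0 (Fin.tail g), Fin.cons 0 (Fin.tail k)) = _
    rw [hg, hk]

theorem card_quotient_zmultiples {p n : ℕ} [Fact p.Prime] (g : Fin n → ZMod p) :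
    p * Nat.card ((Fin n → ZMod p) ⧸ AddSubgroup.zmultiples g) =
      p ^ n + if g = 0 then (p - 1) * p ^ n else 0 := by
  have h := AddSubgroup.card_eq_card_quotient_mul_card_addSubgroup (AddSubgroup.zmultiples g)
  rw [Nat.card_zmultiples] at h
  have hp : 1 ≤ p := (Fact.out : p.Prime).one_le
  simp only [Nat.card_eq_fintype_card (α := Fin n → ZMod p), Fintype.card_fun, ZMod.card,
    Fintype.card_fin] at h
  split_ifs with hg
  · subst hg
    rw [addOrderOf_zero, mul_one] at h
    rw [← h]
    obtain ⟨t, rfl⟩ := Nat.exists_eq_add_of_le hp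
    simp
    ring
  · have : addOrderOf g = p := addOrderOf_eq_prime (by ext i; simp) hg
    rw [this] at h
    rw [h]
    ring

/-- `p * (r(n + 1) - r(n)) = p ^ (2 n) + (p - 1) p ^ n`, written additively. -/
theorem numClasses_succ (p n : ℕ) [Fact p.Prime] :
    p * numClasses (Fin (n + 1) → ZMod p) =
      p * numClasses (Fin n → ZMod p) + (p ^ n * p ^ n + (p - 1) * p ^ n) := by
  classical
  have h := Nat.card_eq_of_bijective _ ⟨classParam_injective p n, classParam_surjective p n⟩
  rw [Nat.card_sum, Nat.card_sigma] at h
  unfold numClasses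
  rw [← h, mul_add, Finset.mul_sum]
  simp_rw [card_quotient_zmultiples]
  simp [Finset.sum_add_distrib]

theorem numClasses_diff_recurrence (p : ℕ) (hp : p.Prime)
    (F : ℕ → ℤ)
    (hF : ∀ n, 1 ≤ n → F n = (numClasses (Fin (n + 1) → ZMod p) : ℤ) -
      numClasses (Fin n → ZMod p)) :
    ∀ n, 2 ≤ n → F n = p * F (n - 1) + (p : ℤ) ^ (2 * n - 2) * ((p : ℤ) - 1) := by
  have : Fact p.Prime := ⟨hp⟩
  have key : ∀ n, 1 ≤ n → (p : ℤ) * F n = p ^ n * p ^ n + (p - 1) * p ^ n := by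
    intro n hn
    have h := congrArg (Nat.cast : ℕ → ℤ) (numClasses_succ p n)
    push_cast [hp.one_le] at h
    rw [hF n hn]
    linear_combination h
  intro n hn
  obtain ⟨m, rfl⟩ := Nat.exists_eq_add_of_le' hn
  have h1 := key (m + 2) (by lia)
  have h2 := key (m + 1) (by lia)
  have e1 : m + 2 - 1 = m + 1 := by lia
  have e2 : 2 * (m + 2) - 2 = 2 * m + 2 := by lia
  rw [e1, e2]
  refine mul_left_cancel₀ (Nat.cast_ne_zero.2 hp.ne_zero : (p : ℤ) ≠ 0) ?_
  linear_combination h1 - p * h2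
end

section
/- For every natural number n ≥ 2, the number of words a_1 a_2 ⋯ a_n of length n with letters a_i ∈ {1,2,3,4} satisfying a_1 = 1 and, for every i, 0 < a_i ≤ max_{j ≤ i-1} a_j + 1 (numbering from left to right), equals (2^{n-1} + 1)(2^{n-2} + 1) / 3. -/
/-!
The count is refined by the maximum `m` of an imaginary prefix: `AdmissibleFrom m a` says that `a`
can be appended to a word whose largest letter is `m`. Splitting off the first letter `x` leaves a
word admissible from `max m x`, so the number `F m n` of such words of length `n` satisfies
`F m (n + 1) = ∑ x ∈ [1, min (m + 1) 4], F (max m x) n` (`card_admissible_succ`). Hence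
`F 4 n = F 3 n = 4 ^ n`, `2 * F 2 n = 4 ^ n + 2 ^ n` and `6 * F 1 n = 4 ^ n + 3 * 2 ^ n + 2`.
The dense words of length `n + 1` are the words admissible from `0`, and their first letter is
forced to be `1`, so they number `F 1 n = (2 ^ n + 1) * (2 ^ n + 2) / 6`.
-/

/-- A word `a_1 ⋯ a_n` over the alphabet `{1,2,3,4}` satisfying the density
condition: every letter is positive and exceeds the maximum of all previous
letters by at most 1. -/
def IsDenseWord (n : ℕ) (a : Fin n → ℕ) : Prop :=
  (∀ i, a i ∈ Finset.Icc 1 4) ∧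
  ∀ i : Fin n, 0 < a i ∧ a i ≤ (Finset.univ.filter fun j => j < i).sup a + 1

/-- The word `a` over `{1,2,3,4}` satisfies the density condition when it is preceded by a prefix
with maximal letter `m` (`m = 0` for the empty prefix). The bound by the running maximum is written
as a disjunction over the prefix and the earlier letters of `a`. -/
def AdmissibleFrom (m : ℕ) {n : ℕ} (a : Fin n → ℕ) : Prop :=
  ∀ i, 1 ≤ a i ∧ a i ≤ 4 ∧ (a i ≤ m + 1 ∨ ∃ j < i, a i ≤ a j + 1)

theorem isDenseWord_iff (n : ℕ) (a : Fin n → ℕ) : IsDenseWord n a ↔ AdmissibleFrom 0 a := by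
  have key : ∀ i : Fin n, a i ≤ (Finset.univ.filter fun j => j < i).sup a + 1 ↔
      (a i ≤ 0 + 1 ∨ ∃ j < i, a i ≤ a j + 1) := by
    intro i
    -- `Finset.le_sup_iff` needs a lower bound above `⊥`, so the letters `≤ 1` are treated apart.
    by_cases h : a i ≤ 1
    · exact ⟨fun _ => Or.inl (by omega), fun _ => by omega⟩
    · have h0 : (⊥ : ℕ) < a i - 1 := by simp; omega
      rw [← Nat.sub_le_iff_le_add, Finset.le_sup_iff h0]
      simp [h]
  unfold IsDenseWord AdmissibleFrom
  simp only [key, Finset.mem_Icc]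
  constructor
  · exact fun h i => ⟨(h.1 i).1, (h.1 i).2, (h.2 i).2⟩
  · exact fun h => ⟨fun i => ⟨(h i).1, (h i).2.1⟩, fun i => ⟨(h i).1, (h i).2.2⟩⟩

theorem admissibleFrom_cons (m n x : ℕ) (b : Fin n → ℕ) :
    AdmissibleFrom m (Fin.cons x b : Fin (n + 1) → ℕ) ↔
      x ∈ Finset.Icc 1 (min (m + 1) 4) ∧ AdmissibleFrom (max m x) b := by
  unfold AdmissibleFrom
  simp only [Fin.forall_fin_succ, Fin.exists_fin_succ, Fin.cons_zero, Fin.cons_succ,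
    Fin.succ_lt_succ_iff, Fin.succ_pos, Fin.not_lt_zero, lt_irrefl, true_and, false_and,
    exists_false, or_false, Finset.mem_Icc, le_min_iff]
  have e : ∀ y, y ≤ max m x + 1 ↔ y ≤ m + 1 ∨ y ≤ x + 1 := by intro y; omega
  simp only [e, or_assoc]
  tauto

/-- Words admissible from `m` of length `n + 1`, split into first letter and remainder. -/
def admissibleSuccEquiv (m n : ℕ) : {a : Fin (n + 1) → ℕ // AdmissibleFrom m a} ≃
    Σ x : Finset.Icc 1 (min (m + 1) 4), {b : Fin n → ℕ // AdmissibleFrom (max m x) b} where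
  toFun a :=
    have h := (admissibleFrom_cons m n (a.1 0) (Fin.tail a.1)).1
      (by rw [Fin.cons_self_tail]; exact a.2)
    ⟨⟨a.1 0, h.1⟩, ⟨Fin.tail a.1, h.2⟩⟩
  invFun p := ⟨Fin.cons p.1.1 p.2.1, (admissibleFrom_cons m n _ _).2 ⟨p.1.2, p.2.2⟩⟩
  left_inv a := Subtype.ext (Fin.cons_self_tail a.1)
  right_inv _ := rfl

instance finite_admissible (m n : ℕ) : Finite {a : Fin n → ℕ // AdmissibleFrom m a} := by
  induction n generalizing m with
  | zero => infer_instance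
  | succ n ih => exact Finite.of_equiv _ (admissibleSuccEquiv m n).symm

/-- The number of words of length `n` that are admissible from `m`. -/
noncomputable def admissibleCount (m n : ℕ) : ℕ := Nat.card {a : Fin n → ℕ // AdmissibleFrom m a}

theorem card_admissible_zero (m : ℕ) : admissibleCount m 0 = 1 := by
  have : Unique {a : Fin 0 → ℕ // AdmissibleFrom m a} :=
    { default := ⟨Fin.elim0, fun i => i.elim0⟩
      uniq := fun a => Subtype.ext (Subsingleton.elim _ _) }
  exact Nat.card_unique

theorem card_admissible_succ (m n : ℕ) :
    admissibleCount m (n + 1) =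
      ∑ x ∈ Finset.Icc 1 (min (m + 1) 4), admissibleCount (max m x) n := by
  unfold admissibleCount
  rw [Nat.card_congr (admissibleSuccEquiv m n), Nat.card_sigma]
  exact Finset.sum_coe_sort (Finset.Icc 1 (min (m + 1) 4))
    (fun x => Nat.card {b : Fin n → ℕ // AdmissibleFrom (max m x) b})

theorem admissibleCount_closed (n : ℕ) :
    admissibleCount 4 n = 4 ^ n ∧ admissibleCount 3 n = 4 ^ n ∧
      2 * admissibleCount 2 n = 4 ^ n + 2 ^ n ∧
      6 * admissibleCount 1 n = 4 ^ n + 3 * 2 ^ n + 2 := by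
  induction n with
  | zero => simp [card_admissible_zero]
  | succ n ih =>
    obtain ⟨h4, h3, h2, h1⟩ := ih
    simp only [card_admissible_succ, pow_succ]
    norm_num [Finset.sum_Icc_succ_top]
    omega

theorem card_denseWords (n : ℕ) (hn : 2 ≤ n) :
    Nat.card {a : Fin n → ℕ // IsDenseWord n a ∧ a ⟨0, by omega⟩ = 1} =
      (2 ^ (n - 1) + 1) * (2 ^ (n - 2) + 1) / 3 := by
  obtain ⟨k, rfl⟩ := Nat.exists_eq_add_of_le' hn
  have e : ∀ a : Fin (k + 2) → ℕ,
      (IsDenseWord (k + 2) a ∧ a ⟨0, by omega⟩ = 1) ↔ AdmissibleFrom 0 a := by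
    intro a
    rw [isDenseWord_iff]
    refine ⟨fun h => h.1, fun h => ⟨h, ?_⟩⟩
    obtain ⟨h1, -, h2 | ⟨j, hj, -⟩⟩ := h ⟨0, by omega⟩
    · omega
    · exact absurd hj (Fin.not_lt_zero j)
  rw [Nat.card_congr (Equiv.subtypeEquivRight e)]
  change admissibleCount 0 (k + 2) = _
  have hs : admissibleCount 0 (k + 2) = admissibleCount 1 (k + 1) := by
    rw [card_admissible_succ]
    simp
  obtain ⟨-, -, -, h1⟩ := admissibleCount_closed (k + 1)
  have h4 : 4 ^ (k + 1) = 4 * (2 ^ k * 2 ^ k) := by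
    rw [pow_succ, ← mul_pow]; norm_num [mul_comm]
  rw [h4, pow_succ] at h1
  have hp : (2 ^ (k + 2 - 1) + 1) * (2 ^ (k + 2 - 2) + 1) = 3 * admissibleCount 1 (k + 1) := by
    have : k + 2 - 1 = k + 1 := by omega
    rw [this, Nat.add_sub_cancel, pow_succ]
    nlinarith
  rw [hs, hp]
  omega
end

section
/- For every natural number n ≥ 1, the number of words a_1 a_2 ⋯ a_{n+1} of length n+1 with letters a_i ∈ {1,2,3,4} satisfying a_1 = 1 and, for every i, 0 < a_i ≤ max_{j ≤ i-1} a_j + 1, equals r(ℤ_2^n), the number of equivalence classes of ℤ_2^n × ℤ_2^n under the equivalence relation generated by (g,k) ~ (k,-g) and (g,k) ~ (g, k + m·g). -/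
/-- The letter that names a column of `ℤ₂²`. -/
def letter (c : ZMod 2 × ZMod 2) : ℕ := 1 + c.1.val + 2 * c.2.val

/-- The column named by a letter, with the junk value `(1, 1)` outside `{1, 2, 3, 4}`. -/
def column (a : ℕ) : ZMod 2 × ZMod 2 :=
  if a = 1 then (0, 0) else if a = 2 then (1, 0) else if a = 3 then (0, 1) else (1, 1)

/-- The word of a pair: the letter `1`, followed by the letters of the columns. -/
def pairWord {n : ℕ} (p : (Fin n → ZMod 2) × (Fin n → ZMod 2)) : Fin (n + 1) → ℕ :=
  Fin.cons 1 fun i => letter (p.1 i, p.2 i)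

lemma letter_column {a : ℕ} (ha : a ∈ Finset.Icc 1 4) : letter (column a) = a := by
  rw [Finset.mem_Icc] at ha
  obtain ⟨h1, h2⟩ := ha
  interval_cases a <;> decide

lemma letter_mem (c : ZMod 2 × ZMod 2) : letter c ∈ Finset.Icc 1 4 := by
  revert c; decide

lemma pairWord_mem {n : ℕ} (p : (Fin n → ZMod 2) × (Fin n → ZMod 2)) (i : Fin (n + 1)) :
    pairWord p i ∈ Finset.Icc 1 4 := by
  refine Fin.cases ?_ (fun i => ?_) i
  · simp [pairWord]
  · simpa [pairWord] using letter_mem (p.1 i, p.2 i)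

/-- An operation on pairs that acts on columns by `f` acts on words by `σ`, if `σ` fixes the
letter `1` and describes `f` in terms of letters. -/
lemma pairWord_of_columns {n : ℕ} {p q : (Fin n → ZMod 2) × (Fin n → ZMod 2)}
    (f : ZMod 2 × ZMod 2 → ZMod 2 × ZMod 2) (σ : ℕ → ℕ) (h1 : σ 1 = 1)
    (hσ : ∀ c, letter (f c) = σ (letter c))
    (hq : ∀ i, (q.1 i, q.2 i) = f (p.1 i, p.2 i)) (i : Fin (n + 1)) :
    pairWord q i = σ (pairWord p i) := by
  refine Fin.cases ?_ (fun i => ?_) i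
  · simp [pairWord, h1]
  · simp [pairWord, hq, hσ]

/-- The operation `(g, k) ↦ (k, -g)` exchanges the letters `2` and `3`. -/
lemma pairWord_rot {n : ℕ} (g k : Fin n → ZMod 2) (i : Fin (n + 1)) :
    pairWord (k, -g) i = Equiv.swap 2 3 (pairWord (g, k) i) :=
  pairWord_of_columns (fun c => (c.2, -c.1)) _ (by decide) (by decide) (fun _ => rfl) i

/-- The operation `(g, k) ↦ (g, k + g)` exchanges the letters `2` and `4`. -/
lemma pairWord_add {n : ℕ} (g k : Fin n → ZMod 2) (i : Fin (n + 1)) :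
    pairWord (g, k + g) i = Equiv.swap 2 4 (pairWord (g, k) i) :=
  pairWord_of_columns (fun c => (c.1, c.2 + c.1)) _ (by decide) (by decide) (fun _ => rfl) i

lemma add_zsmul_eq {n : ℕ} (g k : Fin n → ZMod 2) (m : ℤ) :
    k + m • g = k ∨ k + m • g = k + g := by
  have hg : (2 : ℤ) • g = 0 := by
    ext i
    simp only [Pi.smul_apply, Pi.zero_apply]
    generalize g i = x
    revert x; decide
  rcases Int.even_or_odd' m with ⟨c, rfl | rfl⟩
  · left; rw [mul_comm, mul_smul, hg, smul_zero, add_zero]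
  · right; rw [add_smul, mul_comm, mul_smul, hg, smul_zero, zero_add, one_smul]

/-- The equality pattern of the word of a pair is an invariant of its class. -/
lemma pairWord_ker {n : ℕ} {p q : (Fin n → ZMod 2) × (Fin n → ZMod 2)}
    (h : Quot.mk (pairRel (Fin n → ZMod 2)) p = Quot.mk _ q) (i j : Fin (n + 1)) :
    pairWord p i = pairWord p j ↔ pairWord q i = pairWord q j := by
  refine iff_of_eq (congrArg
    (Quot.lift (fun p => (pairWord p i = pairWord p j : Prop)) ?_) h)
  rintro ⟨g, k⟩ _ (rfl | ⟨m, rfl⟩)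
  · simp only [pairWord_rot, EmbeddingLike.apply_eq_iff_eq]
  · rcases add_zsmul_eq g k m with h | h
    · simp only [h]
    · simp only [h, pairWord_add, EmbeddingLike.apply_eq_iff_eq]

/-- Every transposition of the letters `2, 3, 4` is realised within each class. -/
lemma exists_pairWord_swap {n : ℕ} (p : (Fin n → ZMod 2) × (Fin n → ZMod 2)) {s t : ℕ}
    (hs : 2 ≤ s) (hst : s < t) (ht : t ≤ 4) :
    ∃ q, Quot.mk (pairRel (Fin n → ZMod 2)) q = Quot.mk _ p ∧
      ∀ i, pairWord q i = Equiv.swap s t (pairWord p i) := by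
  obtain ⟨g, k⟩ := p
  have rot : ∀ g k : Fin n → ZMod 2, Quot.mk (pairRel (Fin n → ZMod 2)) (k, -g) =
      Quot.mk _ (g, k) := fun g k => Eq.symm <| Quot.sound <| by
    exact Or.inl rfl
  have add : ∀ g k : Fin n → ZMod 2, Quot.mk (pairRel (Fin n → ZMod 2)) (g, k + g) =
      Quot.mk _ (g, k) := fun g k => Eq.symm <| Quot.sound <| by
    exact Or.inr ⟨1, by simp⟩
  obtain ⟨rfl, rfl⟩ | ⟨rfl, rfl⟩ | ⟨rfl, rfl⟩ :
      (s = 2 ∧ t = 3) ∨ (s = 2 ∧ t = 4) ∨ (s = 3 ∧ t = 4) := by omega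
  · exact ⟨_, rot g k, pairWord_rot g k⟩
  · exact ⟨_, add g k, pairWord_add g k⟩
  · -- `(3 4)` is the conjugate of `(2 4)` by `(2 3)`.
    refine ⟨_, (rot _ _).trans ((add _ _).trans (rot g k)), fun i => ?_⟩
    rw [pairWord_rot, pairWord_add, pairWord_rot]
    have := pairWord_mem (g, k) i
    rw [Finset.mem_Icc] at this
    obtain ⟨h1, h2⟩ := this
    generalize pairWord (g, k) i = x at *
    interval_cases x <;> decide

/-- Every class contains a pair with a dense word, namely one with lexicographically least word. -/
lemma exists_dense {n : ℕ} (p : (Fin n → ZMod 2) × (Fin n → ZMod 2)) :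
    ∃ q, Quot.mk (pairRel (Fin n → ZMod 2)) q = Quot.mk _ p ∧
      IsDenseWord (n + 1) (pairWord q) := by
  obtain ⟨q, hq, hmin⟩ := Set.exists_min_image
    {q | Quot.mk (pairRel (Fin n → ZMod 2)) q = Quot.mk _ p}
    (fun q => toLex (pairWord q)) (Set.toFinite _) ⟨p, rfl⟩
  refine ⟨q, hq, pairWord_mem q, fun i => ?_⟩
  have hi := Finset.mem_Icc.1 (pairWord_mem q i)
  refine ⟨hi.1, ?_⟩
  by_contra! hlt
  set s := (Finset.univ.filter fun j => j < i).sup (pairWord q) with hs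
  have hle : ∀ j < i, pairWord q j ≤ s := fun j hj =>
    Finset.le_sup (f := pairWord q) (by simpa using hj)
  have h0 : pairWord q 0 = 1 := rfl
  have hi0 : 0 < i := by
    rcases Fin.eq_zero_or_eq_succ i with h | ⟨j, h⟩
    · rw [h, h0] at hlt; omega
    · rw [h]; exact Fin.succ_pos j
  have h1 := hle 0 hi0
  obtain ⟨q', hq', hw⟩ := exists_pairWord_swap q (s := s + 1) (t := pairWord q i) (by omega) hlt hi.2
  refine absurd (hmin q' (hq'.trans hq)) (not_le.2 ⟨i, fun j hj => ?_, ?_⟩)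
  · have := hle j hj
    change pairWord q' j = pairWord q j
    rw [hw, Equiv.swap_apply_of_ne_of_ne] <;> omega
  · change pairWord q' i < pairWord q i
    rw [hw, Equiv.swap_apply_right]; exact hlt

/-- In a dense word, every positive number up to the letter at `i` occurs at or before `i`. -/
lemma dense_occurs {m : ℕ} {a : Fin m → ℕ} (ha : IsDenseWord m a) (i : Fin m) :
    ∀ v, 0 < v → v ≤ a i → ∃ j ≤ i, a j = v := by
  induction i using WellFoundedLT.induction with
  | ind i ih =>
    intro v hv hvi
    rcases hvi.eq_or_lt with rfl | hvi
    · exact ⟨i, le_rfl, rfl⟩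
    · have hsup : v ≤ (Finset.univ.filter fun j => j < i).sup a := by
        have := (ha.2 i).2; omega
      obtain ⟨j, hj, hvj⟩ := (Finset.le_sup_iff (by simpa using hv)).1 hsup
      have hji : j < i := by simpa using hj
      obtain ⟨l, hl, hlv⟩ := ih j hji v hv hvj
      exact ⟨l, hl.trans hji.le, hlv⟩

lemma dense_new {m : ℕ} {a : Fin m → ℕ} (ha : IsDenseWord m a) (i : Fin m)
    (hnew : ∀ j < i, a i ≠ a j) : a i = (Finset.univ.filter fun j => j < i).sup a + 1 := by
  refine (ha.2 i).2.antisymm ?_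
  by_contra! hlt
  have hpos := (ha.2 i).1
  obtain ⟨j, hj, hvj⟩ := (Finset.le_sup_iff (by simpa using hpos)).1 (Nat.lt_succ_iff.1 hlt)
  have hji : j < i := by simpa using hj
  obtain ⟨l, hl, hlv⟩ := dense_occurs ha j (a i) hpos hvj
  exact hnew l (hl.trans_lt hji) hlv.symm

lemma dense_ext {m : ℕ} {a b : Fin m → ℕ} (ha : IsDenseWord m a) (hb : IsDenseWord m b)
    (h : ∀ i j, a i = a j ↔ b i = b j) : a = b := by
  funext i
  induction i using WellFoundedLT.induction with
  | ind i ih =>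
    by_cases hex : ∃ j < i, a i = a j
    · obtain ⟨j, hj, hij⟩ := hex
      rw [hij, (h i j).1 hij, ih j hj]
    · push Not at hex
      rw [dense_new ha i hex, dense_new hb i fun j hj hij => hex j hj ((h i j).2 hij)]
      congr 1
      exact Finset.sup_congr rfl fun j hj => ih j (by simpa using hj)

/-- The pair whose columns are named by the letters of `a` after the first. -/
def wordPair {n : ℕ} (a : Fin (n + 1) → ℕ) : (Fin n → ZMod 2) × (Fin n → ZMod 2) :=
  (fun i => (column (a i.succ)).1, fun i => (column (a i.succ)).2)

lemma pairWord_wordPair {n : ℕ} {a : Fin (n + 1) → ℕ} (ha : IsDenseWord (n + 1) a)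
    (h0 : a 0 = 1) : pairWord (wordPair a) = a := by
  funext i
  refine Fin.cases ?_ (fun i => ?_) i
  · simp [pairWord, h0]
  · simpa [pairWord, wordPair] using letter_column (ha.1 i.succ)

lemma column_letter (c : ZMod 2 × ZMod 2) : column (letter c) = c := by
  revert c; decide

lemma wordPair_pairWord {n : ℕ} (p : (Fin n → ZMod 2) × (Fin n → ZMod 2)) :
    wordPair (pairWord p) = p := by
  ext i <;> simp [wordPair, pairWord, column_letter]

theorem card_denseWords_eq_numClasses (n : ℕ) (hn : 1 ≤ n) :
    Nat.card {a : Fin (n + 1) → ℕ // IsDenseWord (n + 1) a ∧ a 0 = 1} =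
      numClasses (Fin n → ZMod 2) := by
  refine Nat.card_congr (Equiv.ofBijective
    (fun a => Quot.mk (pairRel (Fin n → ZMod 2)) (wordPair a.1)) ⟨?_, ?_⟩)
  · rintro ⟨a, ha, ha0⟩ ⟨b, hb, hb0⟩ hab
    have hker := pairWord_ker hab
    simp only [pairWord_wordPair ha ha0, pairWord_wordPair hb hb0] at hker
    exact Subtype.ext (dense_ext ha hb hker)
  · rintro ⟨p⟩
    obtain ⟨q, hq, hd⟩ := exists_dense p
    refine ⟨⟨pairWord q, hd, rfl⟩, ?_⟩
    simpa only [wordPair_pairWord] using hq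
end
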